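/- (Expressive power of InqML_⟹ with respect to information states) Assume the set P of atoms is finite. A state-property C (a class of state-pointed in-models) is definable in InqML_⟹ (i.e., C = {⟨M,s⟩ : M,s ⊨ φ} for some formula φ of L_⟹) if and only if C is closed under ∼ₙ for some n ∈ ℕ, nonempty, and downward closed. -/

import Mathlib

/-- Formulas of the inquisitive modal language `L_⟹`. -/
inductive Form (P : Type) : Type
  | atom : P → Form P
  | bot : Form P
  | and : Form P → Form P → Form P
  | impl : Form P → Form P → Form P
  | idisj : Form P → Form P → Form P
  | yields : Form P → Form P → Form P

/-- An inhabited neighborhood model (in-model). -/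
structure InModel (P : Type) where
  W : Type
  ne : Nonempty W
  Nb : W → Set (Set W)
  nb_nonempty : ∀ w, ∀ s ∈ Nb w, s.Nonempty
  V : W → P → Bool

/-- Support of a formula at an information state. -/
def support {P : Type} (M : InModel P) : Form P → Set M.W → Prop
  | .atom p, s => ∀ w ∈ s, M.V w p = true
  | .bot, s => s = ∅
  | .and φ ψ, s => support M φ s ∧ support M ψ s
  | .impl φ ψ, s => ∀ t : Set M.W, t ⊆ s → support M φ t → support M ψ t
  | .idisj φ ψ, s => support M φ s ∨ support M ψ s
  | .yields φ ψ, s => ∀ w ∈ s, ∀ t ∈ M.Nb w, support M φ t → support M ψ t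

/-- Truth at a world: support at the corresponding singleton state. -/
def truth {P : Type} (M : InModel P) (w : M.W) (φ : Form P) : Prop :=
  support M φ {w}

/-- A formula is truth-conditional if support at any state amounts to truth at
every world of the state. -/
def TruthConditional {P : Type} (φ : Form P) : Prop :=
  ∀ (M : InModel P) (s : Set M.W), support M φ s ↔ ∀ w ∈ s, truth M w φ

/-- Logical equivalence: same supporting states in every in-model. -/
def EquivF {P : Type} (φ ψ : Form P) : Prop :=
  ∀ (M : InModel P) (s : Set M.W), support M φ s ↔ support M ψ s

def Form.neg {P : Type} (φ : Form P) : Form P := .impl φ .bot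
def Form.top {P : Type} : Form P := Form.neg .bot
def Form.or {P : Type} (φ ψ : Form P) : Form P := Form.neg (.and (Form.neg φ) (Form.neg ψ))
def Form.box {P : Type} (φ : Form P) : Form P := .yields Form.top φ
def Form.dia {P : Type} (φ : Form P) : Form P := Form.neg (.yields φ .bot)
def Form.quest {P : Type} (φ : Form P) : Form P := .idisj φ (Form.neg φ)

/-- Declaratives: formulas where `⩔` occurs only within the scope of `⟹`. -/
inductive IsDecl {P : Type} : Form P → Prop
  | atom (p : P) : IsDecl (.atom p)
  | bot : IsDecl .bot
  | and {α β : Form P} : IsDecl α → IsDecl β → IsDecl (.and α β)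
  | impl {α β : Form P} : IsDecl α → IsDecl β → IsDecl (.impl α β)
  | yields (φ ψ : Form P) : IsDecl (.yields φ ψ)

/-- Modal depth. -/
def md {P : Type} : Form P → ℕ
  | .atom _ => 0
  | .bot => 0
  | .and φ ψ => max (md φ) (md ψ)
  | .impl φ ψ => max (md φ) (md ψ)
  | .idisj φ ψ => max (md φ) (md ψ)
  | .yields φ ψ => max (md φ) (md ψ) + 1

/-- Egli-Milner lifting of a relation between worlds to states. -/
def EM {P : Type} {M M' : InModel P} (Z : M.W → M'.W → Prop)
    (s : Set M.W) (s' : Set M'.W) : Prop :=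
  (∀ w ∈ s, ∃ w' ∈ s', Z w w') ∧ (∀ w' ∈ s', ∃ w ∈ s, Z w w')

/-- `Z` is an `n`-bisimulation between `M` and `M'` (indices `i ≤ n`). -/
def IsNBisim {P : Type} (M M' : InModel P) (n : ℕ)
    (Z : ℕ → M.W → M'.W → Prop) : Prop :=
  ∀ i ≤ n, ∀ w w', Z i w w' →
    (∀ p : P, M.V w p = M'.V w' p) ∧
    (∀ j : ℕ, i = j + 1 →
      (∀ s ∈ M.Nb w, ∃ s' ∈ M'.Nb w', EM (Z j) s s') ∧
      (∀ s' ∈ M'.Nb w', ∃ s ∈ M.Nb w, EM (Z j) s s'))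

/-- `n`-bisimilarity of world-pointed models. -/
def NBisimW {P : Type} (n : ℕ) (M : InModel P) (w : M.W)
    (M' : InModel P) (w' : M'.W) : Prop :=
  ∃ Z, IsNBisim M M' n Z ∧ Z n w w'

/-- `n`-bisimilarity of state-pointed models. -/
def NBisimS {P : Type} (n : ℕ) (M : InModel P) (s : Set M.W)
    (M' : InModel P) (s' : Set M'.W) : Prop :=
  ∃ Z, IsNBisim M M' n Z ∧ EM (Z n) s s'

/-- `Z` is a bisimulation between `M` and `M'`. -/
def IsBisim {P : Type} (M M' : InModel P) (Z : M.W → M'.W → Prop) : Prop :=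
  (∃ w w', Z w w') ∧
  ∀ w w', Z w w' →
    (∀ p : P, M.V w p = M'.V w' p) ∧
    (∀ s ∈ M.Nb w, ∃ s' ∈ M'.Nb w', EM Z s s') ∧
    (∀ s' ∈ M'.Nb w', ∃ s ∈ M.Nb w, EM Z s s')

/-- Bisimilarity of world-pointed models. -/
def BisimW {P : Type} (M : InModel P) (w : M.W)
    (M' : InModel P) (w' : M'.W) : Prop :=
  ∃ Z, IsBisim M M' Z ∧ Z w w'

/-- Bisimilarity of state-pointed models. -/
def BisimS {P : Type} (M : InModel P) (s : Set M.W)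
    (M' : InModel P) (s' : Set M'.W) : Prop :=
  ∃ Z, IsBisim M M' Z ∧ EM Z s s'

/-!
Support of `φ` is invariant under `∼ₙ` for `n = md φ`: across a bisimulation, every substate is
matched by a substate at the same depth, and every neighborhood by a neighborhood at depth one less.

Conversely, give every world its `n`-bisimulation type, an element of a finite type when `P` is
finite. A state property closed under `∼ₙ` only depends on the set of types realized in the state,
and if it is also downward closed the admissible sets of types form a lower set `𝒜`. Every set `A`
of types is expressed by a formula `θ A`, supported by exactly the states all of whose types lie in
`A`, so the inquisitive disjunction of the `θ A` over `A ∈ 𝒜` defines the property. That every set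
of types is expressible follows from the fact that the expressible ones form a Boolean algebra
which separates the types: the condition that no neighborhood has `A` as its exact set of types is
expressed by `θ A ⟹ ⩔_{a ∈ A} θ (A \ {a})`.
-/

variable {P : Type}

theorem support_empty (M : InModel P) (φ : Form P) : support M φ ∅ := by
  induction φ with
  | bot => rfl
  | atom | yields => simp [support]
  | and φ ψ hφ hψ => exact ⟨hφ, hψ⟩
  | idisj φ ψ hφ _ => exact Or.inl hφ
  | impl φ ψ _ hψ =>
    intro t ht _
    rwa [Set.subset_empty_iff.1 ht]

theorem antitone_support (M : InModel P) (φ : Form P) : Antitone (support M φ) := by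
  intro t s hts hs
  induction φ with
  | bot => exact Set.subset_empty_iff.1 (hts.trans hs.subset)
  | atom | yields => exact fun w hw => hs w (hts hw)
  | and φ ψ hφ hψ => exact ⟨hφ hs.1, hψ hs.2⟩
  | idisj φ ψ hφ hψ => exact hs.imp hφ hψ
  | impl φ ψ _ _ => exact fun u hu => hs u (hu.trans hts)

theorem support_neg {M : InModel P} {φ : Form P} {s : Set M.W} :
    support M φ.neg s ↔ ∀ w ∈ s, ¬ truth M w φ := by
  constructor
  · exact fun h w hw hφ =>
      Set.singleton_ne_empty w (h {w} (Set.singleton_subset_iff.2 hw) hφ)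
  · exact fun h t ht hφ => Set.eq_empty_iff_forall_notMem.2 fun w hw =>
      h w (ht hw) (antitone_support M φ (Set.singleton_subset_iff.2 hw) hφ)

theorem exists_support_iff_exists_mem {ι : Type*} (θ : ι → Form P) {S : Set ι} (hS : S.Finite) :
    ∃ φ : Form P, ∀ (M : InModel P) (s : Set M.W),
      support M φ s ↔ s = ∅ ∨ ∃ i ∈ S, support M (θ i) s := by
  induction S, hS using Set.Finite.induction_on with
  | empty => exact ⟨.bot, fun M s => by simp [support]⟩
  | @insert i S _ _ ih =>
    obtain ⟨φ, hφ⟩ := ih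
    refine ⟨.idisj (θ i) φ, fun M s => ?_⟩
    simp only [support, hφ, Set.exists_mem_insert, or_left_comm]

instance : Nonempty (InModel P) :=
  ⟨⟨Unit, inferInstance, fun _ => ∅, fun _ _ h => h.elim, fun _ _ => true⟩⟩

section Bisimulation

variable {M M' : InModel P} {n : ℕ}

theorem IsNBisim.symm {Z : ℕ → M.W → M'.W → Prop} (hZ : IsNBisim M M' n Z) :
    IsNBisim M' M n fun i w' w => Z i w w' := fun i hi w' w hw =>
  ⟨fun p => ((hZ i hi w w' hw).1 p).symm, fun j hj =>
    ⟨fun s' hs' => (((hZ i hi w w' hw).2 j hj).2 s' hs').imp fun _ h => ⟨h.1, h.2.symm⟩,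
      fun s hs => (((hZ i hi w w' hw).2 j hj).1 s hs).imp fun _ h => ⟨h.1, h.2.symm⟩⟩⟩

namespace NBisimS

variable {s : Set M.W} {s' : Set M'.W}

theorem symm (h : NBisimS n M s M' s') : NBisimS n M' s' M s := by
  obtain ⟨Z, hZ, hs⟩ := h
  exact ⟨_, hZ.symm, hs.symm⟩

theorem eq_empty (h : NBisimS n M s M' s') (hs : s = ∅) : s' = ∅ := by
  obtain ⟨Z, -, -, hback⟩ := h
  exact Set.eq_empty_iff_forall_notMem.2 fun w' hw' => by simpa [hs] using hback w' hw'

theorem exists_mem_V_eq (h : NBisimS n M s M' s') {w' : M'.W} (hw' : w' ∈ s') :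
    ∃ w ∈ s, ∀ p, M.V w p = M'.V w' p := by
  obtain ⟨Z, hZ, -, hback⟩ := h
  exact (hback w' hw').imp fun w hw => ⟨hw.1, (hZ n le_rfl w w' hw.2).1⟩

theorem exists_subset (h : NBisimS n M s M' s') {t' : Set M'.W} (ht' : t' ⊆ s') :
    ∃ t ⊆ s, NBisimS n M t M' t' := by
  obtain ⟨Z, hZ, -, hback⟩ := h
  refine ⟨{w ∈ s | ∃ w' ∈ t', Z n w w'}, Set.sep_subset _ _, Z, hZ, fun w hw => hw.2, ?_⟩
  intro w' hw'
  obtain ⟨w, hw, hww'⟩ := hback w' (ht' hw')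
  exact ⟨w, ⟨hw, w', hw', hww'⟩, hww'⟩

theorem exists_mem_Nb (h : NBisimS (n + 1) M s M' s') {w' : M'.W} (hw' : w' ∈ s')
    {t' : Set M'.W} (ht' : t' ∈ M'.Nb w') :
    ∃ w ∈ s, ∃ t ∈ M.Nb w, NBisimS n M t M' t' := by
  obtain ⟨Z, hZ, -, hback⟩ := h
  obtain ⟨w, hw, hww'⟩ := hback w' hw'
  obtain ⟨t, ht, htt'⟩ := ((hZ (n + 1) le_rfl w w' hww').2 n rfl).2 t' ht'
  exact ⟨w, hw, t, ht, Z, fun i hi => hZ i (hi.trans n.le_succ), htt'⟩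

theorem support_of_md_le {φ : Form P} (h : NBisimS n M s M' s') (hφ : md φ ≤ n)
    (hs : support M φ s) : support M' φ s' := by
  induction φ generalizing n M M' with
  | atom p =>
    intro w' hw'
    obtain ⟨w, hw, hV⟩ := h.exists_mem_V_eq hw'
    exact (hV p).symm.trans (hs w hw)
  | bot => exact h.eq_empty hs
  | and φ ψ ihφ ihψ =>
    obtain ⟨hφ, hψ⟩ := max_le_iff.1 hφ
    exact ⟨ihφ h hφ hs.1, ihψ h hψ hs.2⟩
  | idisj φ ψ ihφ ihψ =>
    obtain ⟨hφ, hψ⟩ := max_le_iff.1 hφ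
    exact hs.imp (ihφ h hφ) (ihψ h hψ)
  | impl φ ψ ihφ ihψ =>
    obtain ⟨hφ, hψ⟩ := max_le_iff.1 hφ
    intro t' ht' htφ
    obtain ⟨t, ht, htt'⟩ := h.exists_subset ht'
    exact ihψ htt' hψ (hs t ht (ihφ htt'.symm hφ htφ))
  | yields φ ψ ihφ ihψ =>
    obtain ⟨n, rfl⟩ := Nat.exists_eq_add_of_le' ((Nat.le_add_left 1 _).trans hφ)
    obtain ⟨hφ, hψ⟩ := max_le_iff.1 (Nat.le_of_succ_le_succ hφ)
    intro w' hw' t' ht' htφ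
    obtain ⟨w, hw, t, ht, htt'⟩ := h.exists_mem_Nb hw' ht'
    exact ihψ htt' hψ (hs w hw t ht (ihφ htt'.symm hφ htφ))

end NBisimS

end Bisimulation

/-- The type of `n`-bisimulation types over the atoms `P`: a valuation together with, at positive
depth, the collection of sets of types of one depth less realized by the neighborhoods. -/
def BisimType (P : Type) : ℕ → Type
  | 0 => P → Bool
  | n + 1 => (P → Bool) × Set (Set (BisimType P n))

namespace BisimType

instance instFinite [Finite P] : ∀ n, Finite (BisimType P n)
  | 0 => inferInstanceAs (Finite (P → Bool))
  | n + 1 =>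
    have := instFinite n
    inferInstanceAs (Finite ((P → Bool) × Set (Set (BisimType P n))))

/-- The valuation recorded by a bisimulation type. -/
def val : ∀ {n : ℕ}, BisimType P n → P → Bool
  | 0, τ => τ
  | _ + 1, τ => τ.1

/-- The neighborhoods recorded by a bisimulation type of positive depth, each given by the set of
types it realizes. -/
def nbhds {n : ℕ} (τ : BisimType P (n + 1)) : Set (Set (BisimType P n)) :=
  τ.2

end BisimType

/-- The `n`-bisimulation type of a world. -/
def InModel.bisimType (M : InModel P) : (n : ℕ) → M.W → BisimType P n
  | 0, w => M.V w
  | n + 1, w => (M.V w, (M.bisimType n '' ·) '' M.Nb w)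

@[simp]
theorem InModel.val_bisimType (M : InModel P) (n : ℕ) (w : M.W) :
    (M.bisimType n w).val = M.V w := by
  cases n <;> rfl

@[simp]
theorem InModel.nbhds_bisimType (M : InModel P) (n : ℕ) (w : M.W) :
    (M.bisimType (n + 1) w).nbhds = (M.bisimType n '' ·) '' M.Nb w :=
  rfl

section TypeEquality

variable {M M' : InModel P} {n : ℕ}

theorem em_of_image_bisimType_eq {s : Set M.W} {s' : Set M'.W}
    (h : M.bisimType n '' s = M'.bisimType n '' s') :
    EM (fun w w' => M.bisimType n w = M'.bisimType n w') s s' := by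
  constructor
  · intro w hw
    obtain ⟨w', hw', hww'⟩ := h.subset (Set.mem_image_of_mem _ hw)
    exact ⟨w', hw', hww'.symm⟩
  · exact fun w' hw' => h.superset (Set.mem_image_of_mem _ hw')

theorem isNBisim_bisimType_eq (M M' : InModel P) (n : ℕ) :
    IsNBisim M M' n fun i w w' => M.bisimType i w = M'.bisimType i w' := by
  intro i _ w w' hww'
  refine ⟨fun p => by simpa using congrArg (·.val p) hww', ?_⟩
  rintro j rfl
  have hnb : (M.bisimType j '' ·) '' M.Nb w = (M'.bisimType j '' ·) '' M'.Nb w' := by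
    simpa using congrArg BisimType.nbhds hww'
  constructor
  · intro s hs
    obtain ⟨s', hs', h⟩ := hnb.subset (Set.mem_image_of_mem _ hs)
    exact ⟨s', hs', em_of_image_bisimType_eq h.symm⟩
  · intro s' hs'
    obtain ⟨s, hs, h⟩ := hnb.superset (Set.mem_image_of_mem _ hs')
    exact ⟨s, hs, em_of_image_bisimType_eq h⟩

theorem nBisimS_of_image_bisimType_eq {s : Set M.W} {s' : Set M'.W}
    (h : M.bisimType n '' s = M'.bisimType n '' s') : NBisimS n M s M' s' :=
  ⟨_, isNBisim_bisimType_eq M M' n, em_of_image_bisimType_eq h⟩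

end TypeEquality

theorem booleanSubalgebra_eq_top_of_separates {α : Type*} [Finite α]
    (L : BooleanSubalgebra (Set α)) (hL : ∀ x y, (∀ X ∈ L, x ∈ X ↔ y ∈ X) → x = y) :
    L = ⊤ := by
  have singleton_mem (x : α) : {x} ∈ L := by
    have hx : {x} = ⋂₀ {X | X ∈ L ∧ x ∈ X} := by
      refine Set.Subset.antisymm (by simp) fun y hy => (hL x y fun X hX => ⟨?_, ?_⟩).symm
      · exact fun hxX => hy X ⟨hX, hxX⟩
      · exact fun hyX => by_contra fun hxX => hy Xᶜ ⟨L.compl_mem hX, hxX⟩ hyX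
    exact hx ▸ L.sInf_mem (Set.toFinite _) fun X hX => hX.1
  refine eq_top_iff.2 fun X _ => ?_
  exact X.biUnion_of_singleton ▸ L.biSup_mem X.toFinite fun x _ => singleton_mem x

/-- `φ.Expresses X` means that `φ` is truth-conditional with truth set `X`, a set of
`n`-bisimulation types: the states supporting it are those in which only types from `X` are
realized. -/
def Form.Expresses {n : ℕ} (φ : Form P) (X : Set (BisimType P n)) : Prop :=
  ∀ (M : InModel P) (s : Set M.W), support M φ s ↔ M.bisimType n '' s ⊆ X

namespace Form.Expresses

variable {n : ℕ} {φ ψ : Form P} {X Y : Set (BisimType P n)}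

theorem bot : (Form.bot : Form P).Expresses (∅ : Set (BisimType P n)) := fun M s => by
  simp [support]

theorem and (hφ : φ.Expresses X) (hψ : ψ.Expresses Y) : (φ.and ψ).Expresses (X ∩ Y) :=
  fun M s => by simp only [support, hφ M s, hψ M s, Set.subset_inter_iff]

theorem neg (hφ : φ.Expresses X) : φ.neg.Expresses Xᶜ := fun M s => by
  simp only [support_neg, truth, hφ M _, Set.image_singleton, Set.singleton_subset_iff,
    ← Set.mem_compl_iff, Set.image_subset_iff]
  rfl

theorem atom (n : ℕ) (p : P) :
    (Form.atom p).Expresses {τ : BisimType P n | τ.val p = true} := fun M s => by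
  simp [support, Set.subset_def]

end Form.Expresses

/-- The Boolean algebra of the sets of `n`-bisimulation types expressed by a formula. -/
def expressibleSets (P : Type) (n : ℕ) : BooleanSubalgebra (Set (BisimType P n)) where
  carrier := {X | ∃ φ : Form P, φ.Expresses X}
  bot_mem' := ⟨.bot, .bot⟩
  compl_mem' := fun ⟨_, hφ⟩ => ⟨_, hφ.neg⟩
  infClosed' := fun _ ⟨_, hφ⟩ _ ⟨_, hψ⟩ => ⟨_, hφ.and hψ⟩
  supClosed' := fun X ⟨φ, hφ⟩ Y ⟨ψ, hψ⟩ => ⟨φ.or ψ, by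
    simpa [Form.or, Set.compl_inter] using (hφ.neg.and hψ.neg).neg⟩

theorem mem_expressibleSets {n : ℕ} {X : Set (BisimType P n)} :
    X ∈ expressibleSets P n ↔ ∃ φ : Form P, φ.Expresses X :=
  .rfl

theorem subset_imp_exists_subset_sdiff_singleton_iff_ne {α : Type*} {A B : Set α} :
    (B ⊆ A → ∃ a ∈ A, B ⊆ A \ {a}) ↔ B ≠ A := by
  constructor
  · rintro h rfl
    obtain ⟨a, ha, hsub⟩ := h subset_rfl
    exact (hsub ha).2 rfl
  · intro hne hsub
    obtain ⟨a, ha, haB⟩ := Set.exists_of_ssubset (hsub.ssubset_of_ne hne)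
    exact ⟨a, ha, Set.subset_sdiff_singleton hsub haB⟩

theorem setOf_notMem_nbhds_mem_expressibleSets {n : ℕ} {A : Set (BisimType P n)} (hA : A.Finite)
    (h : ∀ B ⊆ A, B ∈ expressibleSets P n) :
    {τ : BisimType P (n + 1) | A ∉ τ.nbhds} ∈ expressibleSets P (n + 1) := by
  obtain ⟨θ, hθ⟩ := h A subset_rfl
  choose ψ hψ using fun a => h (A \ {a}) Set.sdiff_subset
  obtain ⟨χ, hχ⟩ := exists_support_iff_exists_mem ψ hA
  refine ⟨.yields θ χ, fun M s => ?_⟩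
  have yields_iff (w : M.W) : (∀ t ∈ M.Nb w, support M θ t → support M χ t) ↔
      A ∉ (M.bisimType (n + 1) w).nbhds := by
    simp only [InModel.nbhds_bisimType, Set.mem_image, not_exists, not_and]
    refine forall₂_congr fun t ht => ?_
    simp only [hθ M t, hχ M t, hψ _ M t, (M.nb_nonempty w t ht).ne_empty, false_or,
      subset_imp_exists_subset_sdiff_singleton_iff_ne, ne_eq]
  rw [Set.image_subset_iff]
  exact forall₂_congr fun w _ => yields_iff w

theorem BisimType.eq_of_forall_mem_expressibleSets [Finite P] {n : ℕ}
    (hn : ∀ m < n, expressibleSets P m = ⊤) {τ σ : BisimType P n}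
    (h : ∀ X ∈ expressibleSets P n, τ ∈ X ↔ σ ∈ X) : τ = σ := by
  have hval : τ.val = σ.val :=
    funext fun p => Bool.eq_iff_iff.2 (h _ ⟨.atom p, .atom n p⟩)
  cases n with
  | zero => exact hval
  | succ n =>
    refine Prod.ext hval (Set.ext fun A => not_iff_not.1 (h {τ | A ∉ τ.nbhds} ?_))
    exact setOf_notMem_nbhds_mem_expressibleSets A.toFinite fun B _ =>
      hn n n.lt_succ_self ▸ BooleanSubalgebra.mem_top

theorem expressibleSets_eq_top [Finite P] (n : ℕ) : expressibleSets P n = ⊤ := by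
  induction n using Nat.strong_induction_on with
  | _ n ih =>
    exact booleanSubalgebra_eq_top_of_separates _ fun _ _ =>
      BisimType.eq_of_forall_mem_expressibleSets ih

theorem exists_support_iff_image_bisimType_mem [Finite P] {n : ℕ}
    {𝒜 : Set (Set (BisimType P n))} (hne : 𝒜.Nonempty) (h𝒜 : IsLowerSet 𝒜) :
    ∃ φ : Form P, ∀ (M : InModel P) (s : Set M.W),
      support M φ s ↔ M.bisimType n '' s ∈ 𝒜 := by
  have expressible (A : Set (BisimType P n)) : ∃ φ : Form P, φ.Expresses A :=
    mem_expressibleSets.1 (expressibleSets_eq_top (P := P) n ▸ BooleanSubalgebra.mem_top)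
  choose θ hθ using expressible
  obtain ⟨φ, hφ⟩ := exists_support_iff_exists_mem θ 𝒜.toFinite
  refine ⟨φ, fun M s => (hφ M s).trans ⟨?_, fun hs => .inr ⟨_, hs, (hθ _ M s).2 subset_rfl⟩⟩⟩
  rintro (rfl | ⟨A, hA, hs⟩)
  · obtain ⟨A, hA⟩ := hne
    exact h𝒜 (by simp) hA
  · exact h𝒜 ((hθ A M s).1 hs) hA

/-- The sets of `n`-bisimulation types realized by the states with property `C`. -/
def realizedTypeSets (C : ∀ M : InModel P, Set M.W → Prop) (n : ℕ) : Set (Set (BisimType P n)) :=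
  {A | ∃ (M : InModel P) (s : Set M.W), C M s ∧ M.bisimType n '' s = A}

section StateProperty

variable {C : ∀ M : InModel P, Set M.W → Prop}

theorem isLowerSet_realizedTypeSets
    (hdown : ∀ (M : InModel P) (s t : Set M.W), C M s → t ⊆ s → C M t) (n : ℕ) :
    IsLowerSet (realizedTypeSets C n) := by
  rintro _ B hB ⟨M, s, hs, rfl⟩
  obtain ⟨t, hts, rfl⟩ := Set.subset_image_iff.1 hB
  exact ⟨M, t, hdown M s t hs hts, rfl⟩

theorem image_bisimType_mem_realizedTypeSets {n : ℕ}
    (hclosed : ∀ (M M' : InModel P) (s : Set M.W) (s' : Set M'.W),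
      C M s → NBisimS n M s M' s' → C M' s') {M : InModel P} {s : Set M.W} :
    M.bisimType n '' s ∈ realizedTypeSets C n ↔ C M s := by
  refine ⟨?_, fun hs => ⟨M, s, hs, rfl⟩⟩
  rintro ⟨M₀, s₀, hs₀, h⟩
  exact hclosed M₀ M s₀ s hs₀ (nBisimS_of_image_bisimType_eq h)

end StateProperty

/-- over a finite set of atoms, a state-property is definable in
`InqML_⟹` iff it is closed under `∼ₙ` for some `n`, nonempty, and downward
closed. -/
theorem expressive_power_states {P : Type} [Fintype P]
    (C : ∀ M : InModel P, Set M.W → Prop) :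
    (∃ φ : Form P, ∀ (M : InModel P) (s : Set M.W), C M s ↔ support M φ s) ↔
    ((∃ n : ℕ, ∀ (M M' : InModel P) (s : Set M.W) (s' : Set M'.W),
        C M s → NBisimS n M s M' s' → C M' s') ∧
      (∃ (M : InModel P) (s : Set M.W), C M s) ∧
      (∀ (M : InModel P) (s t : Set M.W), C M s → t ⊆ s → C M t)) := by
  constructor
  · rintro ⟨φ, hφ⟩
    simp only [hφ]
    obtain ⟨M⟩ : Nonempty (InModel P) := inferInstance
    exact ⟨⟨md φ, fun _ _ _ _ hs h => h.support_of_md_le le_rfl hs⟩, ⟨M, ∅, support_empty M φ⟩,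
      fun M _ _ hs hts => antitone_support M φ hts hs⟩
  · rintro ⟨⟨n, hclosed⟩, ⟨M, s, hs⟩, hdown⟩
    have hne : (realizedTypeSets C n).Nonempty := ⟨_, M, s, hs, rfl⟩
    obtain ⟨φ, hφ⟩ :=
      exists_support_iff_image_bisimType_mem hne (isLowerSet_realizedTypeSets hdown n)
    exact ⟨φ, fun M s => ((hφ M s).trans (image_bisimType_mem_realizedTypeSets hclosed)).symm⟩
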